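/- Let {Y_k : k ∈ ℕ^d} be a strictly stationary negatively associated field of random variables with E[Y_1] = 0 and 0 < E[Y_1²] < ∞, and set T_k = Σ_{i ≤ k} Y_i. Then there exists a constant K, depending only on d, such that limsup_{n → ∞} |n|^{−1} E[ max_{k ≤ n} T_k² ] ≤ K E[Y_1²]. -/

import Mathlib

/-!
The bound holds for every `n`, not only asymptotically: `E max_{k ≤ n} T_k² ≤ K |n| E Y_1²`. The
proof is a chaining argument with truncation levels that decrease along the scales.

Write `Y = Y⁺ - Y⁻`. Both parts are monotone transforms of the negatively associated families `Y`
and `-Y`, so it suffices to bound the centred sums of the positive parts. After enlarging the box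
its sides are powers of `4`; let `V` be its volume, `s = E Y_1²` and `a = √(s V)`.

* The part of `Y⁺` above the level `a` has mean at most `s / a`. It is nonnegative, so its sum over
  the whole box dominates all partial sums, and by pairwise negative correlation the second moment
  of that sum is of order `a²` (`NegAssocOn.overshoot_bound`).
* For bounded variables, negative association gives
  `E exp (l ∑ (h (X_i) - E h (X_i))) ≤ ∏ E exp (l (h (X_i) - E h (X_i)))`, hence Bernstein-type
  bounds, and a maximum over `N` index sets costs only a factor `log² N`
  (`NegAssocOn.mgf_csum_le`, `NegAssocOn.max_csum`).
* At scale `j` each corner `k` is rounded down to a grid of relative mesh `4⁻ʲ`, and the variables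
  are truncated at `a / 2ʲ`. A link between consecutive scales is a sum over at most `d V / 4ʲ`
  points. The layer of `Y⁺` between `a / 2ʲ⁺¹` and `a / 2ʲ`, discarded in passing to the next scale,
  is nonnegative, so it is bracketed by its sum over all points between the two corners of the cell
  of `k`; the mean of that sum is of order `a / 2ʲ`. There are at most `4 ^ (d (j + 1))` links or
  brackets at scale `j`, so each scale contributes order `(j + 1)² a² / 4ʲ` to the second moment,
  which is summable with room to spare (`abs_csum_chain`, `NegAssocOn.chaining`).

All maxima are handled through explicit integrable majorants, so no measurability or integrability
of the maximum itself is needed.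
-/

open MeasureTheory Filter Finset

noncomputable section

/-- `plog x = ln (max x e)`, the truncated logarithm used in the paper. -/
def plog (x : ℝ) : ℝ := Real.log (max x (Real.exp 1))

/-- A family of real random variables `X i`, `i ∈ S`, is *negatively associated* if for every
pair of disjoint finite subsets `A`, `B` of `S` and all coordinatewise non-decreasing functions
`f`, `g`, one has `Cov (f (X_i, i ∈ A), g (X_j, j ∈ B)) ≤ 0`, whenever the covariance exists. -/
def NegAssocOn {Ω : Type} [MeasurableSpace Ω] (μ : Measure Ω) {ι : Type}
    (X : ι → Ω → ℝ) (S : Set ι) : Prop :=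
  ∀ A B : Finset ι, ↑A ⊆ S → ↑B ⊆ S → Disjoint A B →
    ∀ (f : (↥A → ℝ) → ℝ) (g : (↥B → ℝ) → ℝ), Monotone f → Monotone g →
      Integrable (fun ω => f (fun i => X i ω)) μ →
      Integrable (fun ω => g (fun j => X j ω)) μ →
      Integrable (fun ω => f (fun i => X i ω) * g (fun j => X j ω)) μ →
      ∫ ω, f (fun i => X i ω) * g (fun j => X j ω) ∂μ ≤
        (∫ ω, f (fun i => X i ω) ∂μ) * ∫ ω, g (fun j => X j ω) ∂μ

/-! ### Exponential bounds under negative association -/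

lemma prod_le_pow_card_real {ι : Type} (B : Finset ι) (f : ι → ℝ) (c : ℝ)
    (h0 : ∀ i ∈ B, 0 ≤ f i) (h : ∀ i ∈ B, f i ≤ c) : ∏ i ∈ B, f i ≤ c ^ B.card := by
  rw [← Finset.prod_const]
  exact Finset.prod_le_prod h0 h

lemma NegAssocOn.neg {Ω : Type} [MeasurableSpace Ω] {μ : Measure Ω} {ι : Type}
    {X : ι → Ω → ℝ} {S : Set ι} (h : NegAssocOn μ X S) :
    NegAssocOn μ (fun i ω => -X i ω) S := by
  intro A B hA hB hAB f g hf hg hfi hgi hfgi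
  have := h A B hA hB hAB (fun x => -f (fun i => -x i)) (fun x => -g (fun i => -x i))
    (fun x y hxy => neg_le_neg (hf (fun i => neg_le_neg (hxy i))))
    (fun x y hxy => neg_le_neg (hg (fun i => neg_le_neg (hxy i))))
    hfi.neg hgi.neg (by simpa using hfgi)
  simpa [integral_neg] using this

lemma integrable_of_mem_Icc {Ω : Type} [MeasurableSpace Ω] {μ : Measure Ω}
    [IsProbabilityMeasure μ] {f : Ω → ℝ} {a b : ℝ} (hf : Measurable f)
    (h : ∀ ω, f ω ∈ Set.Icc a b) : Integrable f μ :=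
  Integrable.of_mem_Icc a b hf.aemeasurable (Eventually.of_forall h)

lemma NegAssocOn.integral_prod_le_mono {Ω : Type} [MeasurableSpace Ω] {μ : Measure Ω}
    [IsProbabilityMeasure μ] {ι : Type} {X : ι → Ω → ℝ} {S : Set ι} (h : NegAssocOn μ X S)
    (hX : ∀ i ∈ S, Measurable (X i)) {g : ℝ → ℝ} (hg : Monotone g) {C : ℝ}
    (hg0 : ∀ x, 0 ≤ g x) (hgC : ∀ x, g x ≤ C) (B : Finset ι) (hB : ↑B ⊆ S) :
    ∫ ω, ∏ i ∈ B, g (X i ω) ∂μ ≤ ∏ i ∈ B, ∫ ω, g (X i ω) ∂μ := by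
  classical
  have hint : ∀ B : Finset ι, ↑B ⊆ S → Integrable (fun ω => ∏ i ∈ B, g (X i ω)) μ := by
    intro B hB
    refine integrable_of_mem_Icc (a := 0) (b := C ^ B.card) ?_ ?_
    · exact Finset.measurable_prod _ fun i hi => hg.measurable.comp (hX i (hB hi))
    · exact fun ω => ⟨Finset.prod_nonneg fun i _ => hg0 _,
        prod_le_pow_card_real _ _ _ (fun i _ => hg0 _) fun i _ => hgC _⟩
  induction B using Finset.induction_on with
  | empty => simp
  | insert i B hi ih =>
    have hBS : ↑B ⊆ S := fun x hx => hB (by simp at hx ⊢; exact Or.inr hx)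
    have hiS : ↑({i} : Finset ι) ⊆ S := fun x hx => hB (by simp at hx ⊢; exact Or.inl hx)
    have h1 := hint {i} hiS
    have h2 := hint B hBS
    have h3 := hint (insert i B) hB
    simp only [Finset.prod_insert hi] at h3 ⊢
    simp only [Finset.prod_singleton] at h1
    have e : ∀ ω, ∏ j : ↥B, g (X j ω) = ∏ j ∈ B, g (X j ω) := fun ω =>
      Finset.prod_coe_sort B (fun j => g (X j ω))
    have key := h {i} B hiS hBS (by simpa using hi)
      (fun x => g (x ⟨i, by simp⟩)) (fun x => ∏ j, g (x j))
      (fun x y hxy => hg (hxy _))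
      (fun x y hxy => Finset.prod_le_prod (fun j _ => hg0 _) fun j _ => hg (hxy j))
      h1 (by simpa only [e] using h2) (by simpa only [e] using h3)
    simp only [e] at key
    exact key.trans (mul_le_mul_of_nonneg_left (ih hBS)
      (integral_nonneg fun ω => hg0 _))

/-- Antitone functions are covered too, since `-X` is again negatively associated. -/
lemma NegAssocOn.integral_prod_le {Ω : Type} [MeasurableSpace Ω] {μ : Measure Ω}
    [IsProbabilityMeasure μ] {ι : Type} {X : ι → Ω → ℝ} {S : Set ι} (h : NegAssocOn μ X S)
    (hX : ∀ i ∈ S, Measurable (X i)) {g : ℝ → ℝ} (hg : Monotone g ∨ Antitone g) {C : ℝ}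
    (hg0 : ∀ x, 0 ≤ g x) (hgC : ∀ x, g x ≤ C) (B : Finset ι) (hB : ↑B ⊆ S) :
    ∫ ω, ∏ i ∈ B, g (X i ω) ∂μ ≤ ∏ i ∈ B, ∫ ω, g (X i ω) ∂μ := by
  rcases hg with hg | hg
  · exact h.integral_prod_le_mono hX hg hg0 hgC B hB
  · have := h.neg.integral_prod_le_mono (fun i hi => (hX i hi).neg) (g := fun x => g (-x))
      (fun x y hxy => hg (neg_le_neg hxy)) (fun x => hg0 _) (fun x => hgC _) B hB
    simpa using this

/-- Moment generating function of one centred bounded variable: `e^x ≤ 1 + x + x²` on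
`[-1, 1]`. -/
lemma mgf_single {Ω : Type} [MeasurableSpace Ω] {μ : Measure Ω} [IsProbabilityMeasure μ]
    {Z : Ω → ℝ} (hZ : Measurable Z) {β l s : ℝ} (h0 : ∀ ω, 0 ≤ Z ω) (hβ : ∀ ω, Z ω ≤ β)
    (hl : |l| * β ≤ 1) (hs : ∫ ω, (Z ω) ^ 2 ∂μ ≤ s) :
    ∫ ω, Real.exp (l * Z ω) ∂μ ≤ Real.exp (l * ∫ ω, Z ω ∂μ) * Real.exp (l ^ 2 * s) := by
  have hi : Integrable Z μ := integrable_of_mem_Icc hZ fun ω => ⟨h0 ω, hβ ω⟩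
  have hi2 : Integrable (fun ω => (Z ω) ^ 2) μ :=
    integrable_of_mem_Icc (a := 0) (b := β ^ 2) (hZ.pow_const 2)
      fun ω => ⟨sq_nonneg _, pow_le_pow_left₀ (h0 ω) (hβ ω) 2⟩
  set m := ∫ ω, Z ω ∂μ with hm
  have hm0 : 0 ≤ m := integral_nonneg h0
  have hmβ : m ≤ β := by
    have := integral_mono hi (integrable_const β) hβ
    simpa using this
  have hpt : ∀ ω, Real.exp (l * Z ω) ≤
      Real.exp (l * m) * (1 + l * (Z ω - m) + l ^ 2 * (Z ω - m) ^ 2) := by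
    intro ω
    have h1 : |l * (Z ω - m)| ≤ 1 := by
      rw [abs_mul]
      refine le_trans (mul_le_mul_of_nonneg_left ?_ (abs_nonneg l)) hl
      rw [abs_le]; constructor <;> linarith [h0 ω, hβ ω]
    have h2 := (abs_le.1 (Real.abs_exp_sub_one_sub_id_le h1)).2
    have : Real.exp (l * Z ω) = Real.exp (l * m) * Real.exp (l * (Z ω - m)) := by
      rw [← Real.exp_add]; ring_nf
    rw [this]
    refine mul_le_mul_of_nonneg_left ?_ (Real.exp_pos _).le
    nlinarith
  have hrhs : ∀ ω, Real.exp (l * m) * (1 + l * (Z ω - m) + l ^ 2 * (Z ω - m) ^ 2) =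
      Real.exp (l * m) * ((1 - l * m + l ^ 2 * m ^ 2) + ((l - 2 * l ^ 2 * m) * Z ω +
        l ^ 2 * (Z ω) ^ 2)) := fun ω => by ring
  simp only [hrhs] at hpt
  have hI1 : Integrable (fun ω => (l - 2 * l ^ 2 * m) * Z ω + l ^ 2 * (Z ω) ^ 2) μ :=
    (hi.const_mul _).add (hi2.const_mul _)
  have hI : Integrable (fun ω => Real.exp (l * m) * ((1 - l * m + l ^ 2 * m ^ 2) +
      ((l - 2 * l ^ 2 * m) * Z ω + l ^ 2 * (Z ω) ^ 2))) μ :=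
    ((integrable_const _).add hI1).const_mul _
  have := integral_mono_of_nonneg (Eventually.of_forall fun ω => (Real.exp_pos (l * Z ω)).le)
    hI (Eventually.of_forall hpt)
  refine this.trans ?_
  rw [integral_const_mul, integral_add (integrable_const _) hI1,
    integral_add (hi.const_mul _) (hi2.const_mul _), integral_const_mul, integral_const_mul,
    ← hm]
  refine mul_le_mul_of_nonneg_left ?_ (Real.exp_pos _).le
  have h3 := Real.add_one_le_exp (l ^ 2 * s)
  simp only [integral_const, probReal_univ, smul_eq_mul]
  nlinarith [mul_le_mul_of_nonneg_left hs (sq_nonneg l), sq_nonneg (l * m)]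

/-- Centred sum over `B` of the transformed variables `h (X i)`. -/
def csum {Ω : Type} [MeasurableSpace Ω] (μ : Measure Ω) {ι : Type} (X : ι → Ω → ℝ)
    (h : ℝ → ℝ) (B : Finset ι) (ω : Ω) : ℝ :=
  ∑ i ∈ B, (h (X i ω) - ∫ ω', h (X i ω') ∂μ)

/-- Negative association bounds the moment generating function of a centred sum by the product
of the individual ones. -/
lemma NegAssocOn.mgf_csum_le {Ω : Type} [MeasurableSpace Ω] {μ : Measure Ω}
    [IsProbabilityMeasure μ] {ι : Type} {X : ι → Ω → ℝ} {S : Set ι} (hNA : NegAssocOn μ X S)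
    (hX : ∀ i ∈ S, Measurable (X i)) {h : ℝ → ℝ} (hh : Monotone h) {β l s : ℝ}
    (h0 : ∀ x, 0 ≤ h x) (hβ : ∀ x, h x ≤ β) (hl : |l| * β ≤ 1)
    (hs : ∀ i ∈ S, ∫ ω, (h (X i ω)) ^ 2 ∂μ ≤ s) (B : Finset ι) (hB : ↑B ⊆ S) :
    Integrable (fun ω => Real.exp (l * csum μ X h B ω)) μ ∧
    ∫ ω, Real.exp (l * csum μ X h B ω) ∂μ ≤ Real.exp (l ^ 2 * (B.card * s)) := by
  set m : ι → ℝ := fun i => ∫ ω', h (X i ω') ∂μ with hm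
  have e : ∀ ω, Real.exp (l * csum μ X h B ω) =
      (∏ i ∈ B, Real.exp (l * h (X i ω))) * ∏ i ∈ B, Real.exp (-(l * m i)) := by
    intro ω
    rw [← Finset.prod_mul_distrib, csum, Finset.mul_sum, Real.exp_sum]
    refine Finset.prod_congr rfl fun i _ => ?_
    rw [← Real.exp_add]; congr 1; simp only [hm]; ring
  have hle1 : ∀ x, l * h x ≤ 1 := fun x =>
    (mul_le_mul (le_abs_self l) (hβ x) (h0 x) (abs_nonneg l)).trans hl
  have hg : Monotone (fun x => Real.exp (l * h x)) ∨ Antitone (fun x => Real.exp (l * h x)) := by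
    rcases le_total 0 l with hl0 | hl0
    · exact Or.inl fun x y hxy => Real.exp_le_exp.2 (mul_le_mul_of_nonneg_left (hh hxy) hl0)
    · exact Or.inr fun x y hxy => Real.exp_le_exp.2 (mul_le_mul_of_nonpos_left (hh hxy) hl0)
  have hmeas : ∀ i ∈ S, Measurable fun ω => h (X i ω) := fun i hi => hh.measurable.comp (hX i hi)
  simp only [e]
  refine ⟨Integrable.mul_const ?_ _, ?_⟩
  · refine integrable_of_mem_Icc (a := 0) (b := Real.exp 1 ^ B.card) ?_ ?_
    · exact Finset.measurable_prod _ fun i hi =>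
        Real.measurable_exp.comp ((hmeas i (hB hi)).const_mul l)
    · exact fun ω => ⟨Finset.prod_nonneg fun i _ => (Real.exp_pos _).le,
        prod_le_pow_card_real _ _ _ (fun i _ => (Real.exp_pos _).le)
          fun i _ => Real.exp_le_exp.2 (hle1 _)⟩
  · rw [integral_mul_const]
    have h1 := hNA.integral_prod_le hX hg (fun x => (Real.exp_pos _).le)
      (fun x => Real.exp_le_exp.2 (hle1 x)) B hB
    refine (mul_le_mul_of_nonneg_right h1
      (Finset.prod_nonneg fun i _ => (Real.exp_pos _).le)).trans ?_
    rw [← Finset.prod_mul_distrib]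
    have h2 : ∀ i ∈ B, (∫ ω, Real.exp (l * h (X i ω)) ∂μ) * Real.exp (-(l * m i)) ≤
        Real.exp (l ^ 2 * s) := by
      intro i hi
      have := mgf_single (μ := μ) (hmeas i (hB hi)) (fun ω => h0 _) (fun ω => hβ _) hl
        (hs i (hB hi))
      refine (mul_le_mul_of_nonneg_right this (Real.exp_pos _).le).trans (le_of_eq ?_)
      rw [mul_right_comm, ← Real.exp_add]
      simp [hm]
    refine (prod_le_pow_card_real _ _ _ (fun i _ => mul_nonneg
      (integral_nonneg fun ω => (Real.exp_pos _).le) (Real.exp_pos _).le) h2).trans (le_of_eq ?_)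
    rw [← Real.exp_nat_mul]; congr 1; ring

lemma sq_le_exp_bound (z t l : ℝ) (ht : 0 ≤ t) (hl : 0 < l) :
    z ^ 2 ≤ 2 * t ^ 2 + 4 / l ^ 2 * Real.exp (-(l * t)) *
      (Real.exp (l * z) + Real.exp (-l * z)) := by
  have h1 : Real.exp (l * |z|) ≤ Real.exp (l * z) + Real.exp (-l * z) := by
    rcases abs_cases z with ⟨h, _⟩ | ⟨h, _⟩ <;> rw [h]
    · linarith [Real.exp_pos (-l * z)]
    · have : l * -z = -l * z := by ring
      rw [this]; linarith [Real.exp_pos (l * z)]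
  have h2 : z ^ 2 ≤ 2 * t ^ 2 + 4 / l ^ 2 * (Real.exp (-(l * t)) * Real.exp (l * |z|)) := by
    rw [← Real.exp_add, ← sq_abs]
    have hz := abs_nonneg z
    rcases le_total |z| t with h | h
    · have : 0 ≤ 4 / l ^ 2 * Real.exp (-(l * t) + l * |z|) := by positivity
      nlinarith
    · have hu : 0 ≤ -(l * t) + l * |z| := by nlinarith
      have h3 := Real.quadratic_le_exp_of_nonneg hu
      have h4 : (|z| - t) ^ 2 ≤ 2 / l ^ 2 * Real.exp (-(l * t) + l * |z|) := by
        rw [div_mul_eq_mul_div, le_div_iff₀ (by positivity)]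
        nlinarith
      have h5 : 4 / l ^ 2 * Real.exp (-(l * t) + l * |z|) =
        2 * (2 / l ^ 2 * Real.exp (-(l * t) + l * |z|)) := by ring
      rw [h5]
      nlinarith [sq_nonneg (|z| - 2 * t)]
  refine h2.trans ?_
  rw [mul_assoc]
  gcongr

/-- Maximal second moment over a finite family of index sets, at the price of the logarithm
`l * t` of the size of the family. The maximum is replaced by an explicit integrable majorant. -/
lemma NegAssocOn.max_csum {Ω : Type} [MeasurableSpace Ω] {μ : Measure Ω}
    [IsProbabilityMeasure μ] {ι : Type} {X : ι → Ω → ℝ} {S : Set ι} (hNA : NegAssocOn μ X S)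
    (hX : ∀ i ∈ S, Measurable (X i)) {h : ℝ → ℝ} (hh : Monotone h) {β l s t D : ℝ}
    (h0 : ∀ x, 0 ≤ h x) (hβ : ∀ x, h x ≤ β) (hl0 : 0 < l) (hl : l * β ≤ 1)
    (hs : ∀ i ∈ S, ∫ ω, (h (X i ω)) ^ 2 ∂μ ≤ s) (F : Finset (Finset ι))
    (hF : ∀ B ∈ F, ↑B ⊆ S) (hcard : ∀ B ∈ F, l ^ 2 * (B.card * s) ≤ D) (ht : 0 ≤ t)
    (hFc : (F.card : ℝ) ≤ Real.exp (l * t)) :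
    ∃ G : Ω → ℝ, Integrable G μ ∧ (∀ ω, ∀ B ∈ F, (csum μ X h B ω) ^ 2 ≤ G ω) ∧
      ∫ ω, G ω ∂μ ≤ 2 * t ^ 2 + 8 * Real.exp D / l ^ 2 := by
  have hp := fun B hB => hNA.mgf_csum_le hX hh h0 hβ (l := l)
    (by rwa [abs_of_pos hl0]) hs B (hF B hB)
  have hn := fun B hB => hNA.mgf_csum_le hX hh h0 hβ (l := -l)
    (by rwa [abs_neg, abs_of_pos hl0]) hs B (hF B hB)
  have hI : Integrable (fun ω => ∑ B ∈ F, (Real.exp (l * csum μ X h B ω) +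
      Real.exp (-l * csum μ X h B ω))) μ :=
    integrable_finsetSum _ fun B hB => (hp B hB).1.add (hn B hB).1
  refine ⟨fun ω => 2 * t ^ 2 + 4 / l ^ 2 * Real.exp (-(l * t)) *
      ∑ B ∈ F, (Real.exp (l * csum μ X h B ω) + Real.exp (-l * csum μ X h B ω)), ?_, ?_, ?_⟩
  · exact (integrable_const _).add (hI.const_mul _)
  · intro ω B hB
    refine (sq_le_exp_bound _ t l ht hl0).trans ?_
    refine add_le_add le_rfl (mul_le_mul_of_nonneg_left ?_ (by positivity))
    exact Finset.single_le_sum (f := fun B => Real.exp (l * csum μ X h B ω) +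
      Real.exp (-l * csum μ X h B ω)) (fun B _ => by positivity) hB
  · have hsum := integral_finsetSum F (μ := μ)
      (f := fun B ω => Real.exp (l * csum μ X h B ω) + Real.exp (-l * csum μ X h B ω))
      fun B hB => (hp B hB).1.add (hn B hB).1
    rw [integral_add (integrable_const _) (hI.const_mul _), integral_const_mul (4 / l ^ 2 * _),
      hsum]
    have h1 : ∑ B ∈ F, ∫ ω, (Real.exp (l * csum μ X h B ω) +
        Real.exp (-l * csum μ X h B ω)) ∂μ ≤ Real.exp (l * t) * (2 * Real.exp D) := by
      have : ∀ B ∈ F, ∫ ω, (Real.exp (l * csum μ X h B ω) +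
        Real.exp (-l * csum μ X h B ω)) ∂μ ≤ 2 * Real.exp D := by
        intro B hB
        rw [integral_add (hp B hB).1 (hn B hB).1]
        have a1 := (hp B hB).2.trans (Real.exp_le_exp.2 (hcard B hB))
        have a2 := (hn B hB).2
        rw [neg_sq] at a2
        have a3 := a2.trans (Real.exp_le_exp.2 (hcard B hB))
        linarith
      refine (Finset.sum_le_card_nsmul _ _ _ this).trans ?_
      rw [nsmul_eq_mul]
      gcongr
    have h2 : 4 / l ^ 2 * Real.exp (-(l * t)) * (Real.exp (l * t) * (2 * Real.exp D)) =
        8 * Real.exp D / l ^ 2 := by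
      have : Real.exp (-(l * t)) * Real.exp (l * t) = 1 := by rw [← Real.exp_add]; simp
      calc _ = 4 / l ^ 2 * (Real.exp (-(l * t)) * Real.exp (l * t)) * (2 * Real.exp D) := by ring
        _ = _ := by rw [this]; ring
    rw [← h2]
    simp only [integral_const, probReal_univ, smul_eq_mul, one_mul]
    gcongr

/-! ### Truncation -/

/-- The positive part of `x`, truncated at level `β`. -/
def clip (β x : ℝ) : ℝ := min (max x 0) β

/-- The part of `x⁺` between the levels `β'` and `β`. -/
def layer (β β' x : ℝ) : ℝ := clip β x - clip β' x

/-- The part of `x⁺` above the level `β`. -/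
def overshoot (β x : ℝ) : ℝ := max x 0 - clip β x

lemma clip_mono (β : ℝ) : Monotone (clip β) := fun x y h => by
  unfold clip; gcongr

lemma clip_nonneg {β : ℝ} (hβ : 0 ≤ β) (x : ℝ) : 0 ≤ clip β x :=
  le_min (le_max_right _ _) hβ

lemma clip_le (β x : ℝ) : clip β x ≤ β := min_le_right _ _

lemma clip_le_abs (β x : ℝ) : clip β x ≤ |x| :=
  (min_le_left _ _).trans (max_le (le_abs_self x) (abs_nonneg x))

lemma layer_mono {β β' : ℝ} (h : β' ≤ β) : Monotone (layer β β') := fun x y hxy => by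
  have : max x 0 ≤ max y 0 := by gcongr
  unfold layer clip
  generalize max x 0 = u at *
  generalize max y 0 = v at *
  rcases min_cases u β with h1 | h1 <;> rcases min_cases u β' with h2 | h2 <;>
  rcases min_cases v β with h3 | h3 <;> rcases min_cases v β' with h4 | h4 <;> linarith

lemma layer_nonneg {β β' : ℝ} (h : β' ≤ β) (x : ℝ) : 0 ≤ layer β β' x := by
  unfold layer clip
  have : min (max x 0) β' ≤ min (max x 0) β := by gcongr
  linarith

lemma layer_le_clip {β β' : ℝ} (h' : 0 ≤ β') (x : ℝ) : layer β β' x ≤ clip β x := by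
  unfold layer; linarith [clip_nonneg h' x]

lemma overshoot_mono (β : ℝ) : Monotone (overshoot β) := fun x y hxy => by
  have : max x 0 ≤ max y 0 := by gcongr
  unfold overshoot clip
  generalize max x 0 = u at *
  generalize max y 0 = v at *
  rcases min_cases u β with h1 | h1 <;> rcases min_cases v β with h3 | h3 <;> linarith

lemma overshoot_nonneg (β x : ℝ) : 0 ≤ overshoot β x := by
  unfold overshoot clip; linarith [min_le_left (max x 0) β]

lemma overshoot_le_abs {β : ℝ} (hβ : 0 ≤ β) (x : ℝ) : overshoot β x ≤ |x| := by
  unfold overshoot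
  linarith [clip_nonneg hβ x, max_le (le_abs_self x) (abs_nonneg x)]

/-- Markov-type bound: the overshoot vanishes unless `x > β`. -/
lemma overshoot_le_sq {β : ℝ} (hβ : 0 < β) (x : ℝ) : overshoot β x ≤ x ^ 2 / β := by
  rw [le_div_iff₀ hβ]
  unfold overshoot clip
  rcases max_cases x 0 with h | h <;> rcases min_cases (max x 0) β with h1 | h1 <;>
    rw [h1.1] <;> nlinarith [sq_nonneg x]

lemma layer_le_sq {β β' : ℝ} (hβ : 0 < β') (x : ℝ) : layer β β' x ≤ x ^ 2 / β' := by
  refine le_trans ?_ (overshoot_le_sq hβ x)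
  unfold layer overshoot clip; linarith [min_le_left (max x 0) β]

/-! ### Centred sums and the part above the top level -/

section
variable {Ω : Type} [MeasurableSpace Ω] {μ : Measure Ω} {ι : Type}

lemma integral_sq_le {Z : Ω → ℝ} (hZi : Integrable (fun ω => (Z ω) ^ 2) μ) {s : ℝ}
    (hs : ∫ ω, (Z ω) ^ 2 ∂μ ≤ s) {h : ℝ → ℝ} (h0 : ∀ x, 0 ≤ h x) (h1 : ∀ x, h x ≤ |x|) :
    ∫ ω, (h (Z ω)) ^ 2 ∂μ ≤ s := by
  refine le_trans (integral_mono_of_nonneg (Eventually.of_forall fun ω => sq_nonneg _) hZi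
    (Eventually.of_forall fun ω => ?_)) hs
  have := pow_le_pow_left₀ (h0 (Z ω)) (h1 (Z ω)) 2
  simpa using this

lemma integral_le_div {Z : Ω → ℝ} (hZi : Integrable (fun ω => (Z ω) ^ 2) μ) {s β : ℝ}
    (hβ : 0 < β) (hs : ∫ ω, (Z ω) ^ 2 ∂μ ≤ s) {h : ℝ → ℝ} (h0 : ∀ x, 0 ≤ h x)
    (h1 : ∀ x, h x ≤ x ^ 2 / β) : ∫ ω, h (Z ω) ∂μ ≤ s / β := by
  have := integral_mono_of_nonneg (μ := μ) (Eventually.of_forall fun ω => h0 (Z ω))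
    (hZi.div_const β) (Eventually.of_forall fun ω => h1 (Z ω))
  rw [integral_div] at this
  exact this.trans (by gcongr)

lemma csum_union [DecidableEq ι] (X : ι → Ω → ℝ) (h : ℝ → ℝ) {A C : Finset ι} (hAC : A ⊆ C)
    (ω : Ω) : csum μ X h C ω = csum μ X h A ω + csum μ X h (C \ A) ω := by
  unfold csum; rw [add_comm, Finset.sum_sdiff hAC]

lemma csum_add (X : ι → Ω → ℝ) {h h1 h2 : ℝ → ℝ} (e : ∀ x, h x = h1 x + h2 x) (A : Finset ι)
    (i1 : ∀ i ∈ A, Integrable (fun ω => h1 (X i ω)) μ)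
    (i2 : ∀ i ∈ A, Integrable (fun ω => h2 (X i ω)) μ) (ω : Ω) :
    csum μ X h A ω = csum μ X h1 A ω + csum μ X h2 A ω := by
  unfold csum
  rw [← Finset.sum_add_distrib]
  refine Finset.sum_congr rfl fun i hi => ?_
  simp only [e]
  rw [integral_add (i1 i hi) (i2 i hi)]
  ring

/-- Bracketing: for nonnegative summands a centred sum over a subset is controlled by the one
over the full set, up to the total mean. -/
lemma abs_csum_le (X : ι → Ω → ℝ) {h : ℝ → ℝ} (h0 : ∀ x, 0 ≤ h x) {C B : Finset ι}
    (hCB : C ⊆ B) (ω : Ω) :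
    |csum μ X h C ω| ≤ |csum μ X h B ω| + ∑ i ∈ B, ∫ ω', h (X i ω') ∂μ := by
  have m0 : ∀ i, 0 ≤ ∫ ω', h (X i ω') ∂μ := fun i => integral_nonneg fun ω => h0 _
  have e1 : ∑ i ∈ C, h (X i ω) ≤ ∑ i ∈ B, h (X i ω) :=
    Finset.sum_le_sum_of_subset_of_nonneg hCB fun i _ _ => h0 _
  have e2 : ∑ i ∈ C, ∫ ω', h (X i ω') ∂μ ≤ ∑ i ∈ B, ∫ ω', h (X i ω') ∂μ :=
    Finset.sum_le_sum_of_subset_of_nonneg hCB fun i _ _ => m0 i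
  have e3 : 0 ≤ ∑ i ∈ C, h (X i ω) := Finset.sum_nonneg fun i _ => h0 _
  have e4 : 0 ≤ ∑ i ∈ C, ∫ ω', h (X i ω') ∂μ := Finset.sum_nonneg fun i _ => m0 i
  have e5 := le_abs_self (csum μ X h B ω)
  have e6 := abs_nonneg (csum μ X h B ω)
  unfold csum at *
  rw [Finset.sum_sub_distrib] at *
  rw [Finset.sum_sub_distrib] at *
  rw [abs_le]
  constructor <;> linarith

/-- The part of the variables above the level `a` is so small in mean that its sum over the whole
box, a monotone quantity, dominates all its partial sums at the right order. -/
lemma NegAssocOn.overshoot_bound [IsProbabilityMeasure μ] {X : ι → Ω → ℝ} {S : Set ι}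
    (hNA : NegAssocOn μ X S) (hX : ∀ i ∈ S, Measurable (X i)) {s a : ℝ} (ha : 0 < a)
    (hXi : ∀ i ∈ S, Integrable (fun ω => (X i ω) ^ 2) μ)
    (hs : ∀ i ∈ S, ∫ ω, (X i ω) ^ 2 ∂μ ≤ s) (I : Finset ι) (hI : ↑I ⊆ S)
    (hIc : I.card * s ≤ a ^ 2) :
    ∃ G : Ω → ℝ, Integrable G μ ∧
      (∀ ω, ∀ A ⊆ I, (csum μ X (overshoot a) A ω) ^ 2 ≤ G ω) ∧
      ∫ ω, G ω ∂μ ≤ 6 * a ^ 2 := by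
  classical
  set U : ι → Ω → ℝ := fun i ω => overshoot a (X i ω) with hU
  set m : ι → ℝ := fun i => ∫ ω, U i ω ∂μ with hm
  have hU0 : ∀ i ω, 0 ≤ U i ω := fun i ω => overshoot_nonneg _ _
  have hm0 : ∀ i, 0 ≤ m i := fun i => integral_nonneg (hU0 i)
  have hUm : ∀ i ∈ S, Measurable (U i) := fun i hi =>
    (overshoot_mono a).measurable.comp (hX i hi)
  have hL : ∀ i ∈ S, MemLp (U i) 2 μ := by
    intro i hi
    have hXL : MemLp (X i) 2 μ := (memLp_two_iff_integrable_sq (hX i hi).aestronglyMeasurable).2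
      (hXi i hi)
    refine hXL.mono (hUm i hi).aestronglyMeasurable (Eventually.of_forall fun ω => ?_)
    rw [Real.norm_eq_abs, Real.norm_eq_abs, abs_of_nonneg (hU0 i ω)]
    exact overshoot_le_abs ha.le _
  have hUi : ∀ i ∈ S, Integrable (U i) μ := fun i hi => (hL i hi).integrable (by norm_num)
  have hUU : ∀ i ∈ S, ∀ j ∈ S, Integrable (fun ω => U i ω * U j ω) μ := fun i hi j hj =>
    (hL i hi).integrable_mul (hL j hj)
  have hcov : ∀ i ∈ S, ∀ j ∈ S, ∫ ω, U i ω * U j ω ∂μ ≤ m i * m j + if i = j then s else 0 := by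
    intro i hi j hj
    split_ifs with hij
    · subst hij
      have h2 : ∫ ω, U i ω * U i ω ∂μ ≤ s := by
        simpa only [← sq] using integral_sq_le (hXi i hi) (hs i hi) (overshoot_nonneg a)
          (overshoot_le_abs ha.le)
      nlinarith [mul_nonneg (hm0 i) (hm0 i)]
    · have := hNA {i} {j} (by simpa using hi) (by simpa using hj) (by simpa using hij)
        (fun x => overshoot a (x ⟨i, by simp⟩)) (fun x => overshoot a (x ⟨j, by simp⟩))
        (fun x y hxy => overshoot_mono a (hxy _)) (fun x y hxy => overshoot_mono a (hxy _))
        (hUi i hi) (hUi j hj) (hUU i hi j hj)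
      simpa using this
  have hmsum : ∑ i ∈ I, m i ≤ a := by
    have h1 : ∀ i ∈ I, m i ≤ s / a := fun i hi =>
      integral_le_div (hXi i (hI hi)) ha (hs i (hI hi)) (overshoot_nonneg a) (overshoot_le_sq ha)
    refine (Finset.sum_le_card_nsmul _ _ _ h1).trans ?_
    rw [nsmul_eq_mul, ← mul_div_assoc, div_le_iff₀ ha]
    nlinarith
  have hmsum0 : 0 ≤ ∑ i ∈ I, m i := Finset.sum_nonneg fun i _ => hm0 i
  have hexp : ∀ ω, (∑ i ∈ I, U i ω) ^ 2 = ∑ i ∈ I, ∑ j ∈ I, U i ω * U j ω := fun ω => by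
    rw [sq, Finset.sum_mul_sum]
  have hint : Integrable (fun ω => (∑ i ∈ I, U i ω) ^ 2) μ := by
    simp only [hexp]
    exact integrable_finsetSum _ fun i hi => integrable_finsetSum _ fun j hj =>
      hUU i (hI hi) j (hI hj)
  refine ⟨fun ω => 2 * (∑ i ∈ I, U i ω) ^ 2 + 2 * a ^ 2,
    (hint.const_mul 2).add (integrable_const _), ?_, ?_⟩
  · intro ω A hA
    have e1 : ∑ i ∈ A, U i ω ≤ ∑ i ∈ I, U i ω :=
      Finset.sum_le_sum_of_subset_of_nonneg hA fun i _ _ => hU0 i ω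
    have e2 : ∑ i ∈ A, m i ≤ ∑ i ∈ I, m i :=
      Finset.sum_le_sum_of_subset_of_nonneg hA fun i _ _ => hm0 i
    have e3 : 0 ≤ ∑ i ∈ A, U i ω := Finset.sum_nonneg fun i _ => hU0 i ω
    have e4 : 0 ≤ ∑ i ∈ A, m i := Finset.sum_nonneg fun i _ => hm0 i
    have e5 : csum μ X (overshoot a) A ω = ∑ i ∈ A, U i ω - ∑ i ∈ A, m i := by
      rw [csum, Finset.sum_sub_distrib]
    rw [e5]
    have e6 := pow_le_pow_left₀ e3 e1 2
    have e7 := pow_le_pow_left₀ e4 (e2.trans hmsum) 2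
    nlinarith [mul_nonneg e3 e4]
  · rw [integral_add (hint.const_mul 2) (integrable_const _), integral_const_mul]
    have h1 : ∫ ω, (∑ i ∈ I, U i ω) ^ 2 ∂μ ≤ 2 * a ^ 2 := by
      simp only [hexp]
      rw [integral_finsetSum _ fun i hi => integrable_finsetSum _ fun j hj =>
        hUU i (hI hi) j (hI hj)]
      calc ∑ i ∈ I, ∫ ω, ∑ j ∈ I, U i ω * U j ω ∂μ
          = ∑ i ∈ I, ∑ j ∈ I, ∫ ω, U i ω * U j ω ∂μ :=
            Finset.sum_congr rfl fun i hi => integral_finsetSum _ fun j hj =>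
              hUU i (hI hi) j (hI hj)
        _ ≤ ∑ i ∈ I, ∑ j ∈ I, (m i * m j + if i = j then s else 0) :=
            Finset.sum_le_sum fun i hi => Finset.sum_le_sum fun j hj =>
              hcov i (hI hi) j (hI hj)
        _ = (∑ i ∈ I, m i) ^ 2 + I.card * s := by
            simp only [Finset.sum_add_distrib]
            rw [sq, Finset.sum_mul_sum]
            congr 1
            rw [Finset.sum_congr rfl (g := fun _ => s) fun i hi => by simp [hi]]
            simp
        _ ≤ 2 * a ^ 2 := by nlinarith [pow_le_pow_left₀ hmsum0 hmsum 2]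
    simp only [integral_const, probReal_univ, smul_eq_mul, one_mul]
    linarith

end

/-! ### Chaining -/

/-- Contribution of the scale `j` to the chaining sum. -/
def chainTerm (D M : ℝ) (j : ℕ) : ℝ :=
  (1 / 2) ^ j * (4 * (j + 1) ^ 2 * M ^ 2 + 16 * Real.exp D + 4 * D ^ 2)

lemma chainTerm_nonneg (D M : ℝ) (j : ℕ) : 0 ≤ chainTerm D M j := by
  unfold chainTerm; positivity

lemma summable_chainTerm (D M : ℝ) : Summable (chainTerm D M) := by
  have h2 := summable_pow_mul_geometric_of_norm_lt_one 2 (r := (1 / 2 : ℝ)) (by norm_num)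
  have h1 := summable_pow_mul_geometric_of_norm_lt_one 1 (r := (1 / 2 : ℝ)) (by norm_num)
  have h0 := summable_pow_mul_geometric_of_norm_lt_one 0 (r := (1 / 2 : ℝ)) (by norm_num)
  refine (((h2.mul_left (4 * M ^ 2)).add (h1.mul_left (8 * M ^ 2))).add
    (h0.mul_left (4 * M ^ 2 + 16 * Real.exp D + 4 * D ^ 2))).congr fun j => ?_
  unfold chainTerm; ring

/-- The constant produced by the chaining argument. -/
def chainConst (D M : ℝ) : ℝ := 12 + 12 * ∑' j, chainTerm D M j

lemma chainConst_nonneg (D M : ℝ) : 0 ≤ chainConst D M := by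
  have : 0 ≤ ∑' j, chainTerm D M j := tsum_nonneg (chainTerm_nonneg D M)
  unfold chainConst; positivity

/-- Cauchy–Schwarz with the weights `2⁻ʲ`. -/
lemma sq_sum_le_weighted (J : ℕ) (c : ℕ → ℝ) :
    (∑ j ∈ range J, c j) ^ 2 ≤ 2 * ∑ j ∈ range J, 2 ^ j * (c j) ^ 2 := by
  have h1 := Finset.sum_sq_le_sum_mul_sum_of_sq_le_mul (range J) (r := c)
    (f := fun j => (1 / 2 : ℝ) ^ j) (g := fun j => 2 ^ j * (c j) ^ 2)
    (fun j _ => by positivity) (fun j _ => by positivity)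
    (fun j _ => le_of_eq (by rw [← mul_assoc, ← mul_pow]; norm_num))
  have h2 : ∑ j ∈ range J, (1 / 2 : ℝ) ^ j ≤ 2 := sum_geometric_two_le J
  exact h1.trans (mul_le_mul_of_nonneg_right h2 (Finset.sum_nonneg fun j _ => by positivity))

/-- Telescoping over the scales. The part of the sum over `A J` not yet resolved at scale `j`
uses the truncation level `a / 2 ^ j`; moving to the next scale produces a link (the increment
`A (j+1) \ A j`) and a removed layer, bracketed by its sum over `B j`. -/
lemma abs_csum_chain {Ω : Type} [MeasurableSpace Ω] {μ : Measure Ω} [IsProbabilityMeasure μ]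
    {ι : Type} [DecidableEq ι] {X : ι → Ω → ℝ} {a : ℝ} (ha : 0 < a) (J : ℕ)
    (A B : ℕ → Finset ι) (hX : ∀ i ∈ A J, Measurable (X i))
    (hA : ∀ j < J, A j ⊆ A (j + 1)) (hAB : ∀ j < J, A J \ A j ⊆ B j) (ω : Ω) :
    |csum μ X (clip a) (A J \ A 0) ω| ≤ ∑ j ∈ range J,
      (|csum μ X (clip (a / 2 ^ j)) (A (j + 1) \ A j) ω| +
        (|csum μ X (layer (a / 2 ^ j) (a / 2 ^ (j + 1))) (B j) ω| +
          ∑ i ∈ B j, ∫ ω', layer (a / 2 ^ j) (a / 2 ^ (j + 1)) (X i ω') ∂μ)) := by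
  have hsub' : ∀ n ≤ J, ∀ j ≤ n, A j ⊆ A n := by
    intro n
    induction n with
    | zero => intro _ j hj; rw [Nat.le_zero.1 hj]
    | succ n ih =>
      intro hn j hj
      rcases Nat.le_succ_iff.1 hj with h | h
      · exact (ih (by omega) j h).trans (hA n (by omega))
      · rw [h]
  have hsub := hsub' J le_rfl
  have main : ∀ p ≤ J, |csum μ X (clip a) (A J \ A 0) ω| ≤ (∑ j ∈ range p,
      (|csum μ X (clip (a / 2 ^ j)) (A (j + 1) \ A j) ω| +
        (|csum μ X (layer (a / 2 ^ j) (a / 2 ^ (j + 1))) (B j) ω| +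
          ∑ i ∈ B j, ∫ ω', layer (a / 2 ^ j) (a / 2 ^ (j + 1)) (X i ω') ∂μ))) +
      |csum μ X (clip (a / 2 ^ p)) (A J \ A p) ω| := by
    intro p
    induction p with
    | zero => intro _; simp
    | succ p ih =>
      intro hp
      refine (ih (by omega)).trans ?_
      rw [Finset.sum_range_succ]
      have hb : 0 < a / 2 ^ (p + 1) := by positivity
      have hb' : 0 < a / 2 ^ p := by positivity
      have hbb : a / 2 ^ (p + 1) ≤ a / 2 ^ p := by
        gcongr
        · norm_num
        · omega
      have e1 := csum_union (μ := μ) X (clip (a / 2 ^ p))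
        (Finset.sdiff_subset_sdiff (hsub (p + 1) hp) (subset_refl (A p))) ω
      have e2 : (A J \ A p) \ (A (p + 1) \ A p) = A J \ A (p + 1) := by
        ext x
        have := @hA p (by omega) x
        simp only [Finset.mem_sdiff]
        tauto
      rw [e2] at e1
      have iclip : ∀ b, 0 ≤ b → ∀ i ∈ A J \ A (p + 1), Integrable (fun ω => clip b (X i ω)) μ :=
        fun b hb i hi => integrable_of_mem_Icc
          ((clip_mono b).measurable.comp (hX i (Finset.mem_sdiff.1 hi).1))
          fun ω => ⟨clip_nonneg hb _, clip_le _ _⟩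
      have e3 := csum_add (μ := μ) X (h := clip (a / 2 ^ p)) (h1 := clip (a / 2 ^ (p + 1)))
        (h2 := layer (a / 2 ^ p) (a / 2 ^ (p + 1))) (fun x => by unfold layer; ring)
        (A J \ A (p + 1)) (iclip _ hb.le)
        (fun i hi => (iclip _ hb'.le i hi).sub (iclip _ hb.le i hi)) ω
      have hsub2 : A J \ A (p + 1) ⊆ B p :=
        (Finset.sdiff_subset_sdiff (subset_refl _) (hA p (by omega))).trans (hAB p (by omega))
      have e4 := abs_csum_le (μ := μ) X (layer_nonneg hbb) hsub2 ω
      rw [e1, e3]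
      have t1 := abs_add_le (csum μ X (clip (a / 2 ^ p)) (A (p + 1) \ A p) ω)
        (csum μ X (clip (a / 2 ^ (p + 1))) (A J \ A (p + 1)) ω +
          csum μ X (layer (a / 2 ^ p) (a / 2 ^ (p + 1))) (A J \ A (p + 1)) ω)
      have t2 := abs_add_le (csum μ X (clip (a / 2 ^ (p + 1))) (A J \ A (p + 1)) ω)
        (csum μ X (layer (a / 2 ^ p) (a / 2 ^ (p + 1))) (A J \ A (p + 1)) ω)
      linarith
  have := main J le_rfl
  simpa [csum] using this

/-- Maximal inequality for positive parts along a chain of approximating sets: at scale `j` the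
exceptional sets have size at most `D V / 4 ^ j` and there are at most `M ^ (j + 1)` of them. -/
theorem NegAssocOn.chaining {Ω : Type} [MeasurableSpace Ω] {μ : Measure Ω}
    [IsProbabilityMeasure μ] {ι κ : Type} [DecidableEq ι] {X : ι → Ω → ℝ} {S : Set ι}
    (hNA : NegAssocOn μ X S) (hX : ∀ i ∈ S, Measurable (X i)) {s a V D : ℝ} {M : ℕ}
    (ha : 0 < a) (hs0 : 0 < s) (haV : a ^ 2 = s * V)
    (hXi : ∀ i ∈ S, Integrable (fun ω => (X i ω) ^ 2) μ)
    (hs : ∀ i ∈ S, ∫ ω, (X i ω) ^ 2 ∂μ ≤ s)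
    (I : Finset ι) (hI : ↑I ⊆ S) (hIc : (I.card : ℝ) ≤ V)
    (K : Finset κ) (J : ℕ) (A B : ℕ → κ → Finset ι)
    (hA0 : ∀ k ∈ K, A 0 k = ∅) (hAJ : ∀ k ∈ K, A J k ⊆ I)
    (hA : ∀ j < J, ∀ k ∈ K, A j k ⊆ A (j + 1) k)
    (hAB : ∀ j < J, ∀ k ∈ K, A J k \ A j k ⊆ B j k)
    (hLB : ∀ j < J, ∀ k ∈ K, A (j + 1) k \ A j k ⊆ B j k)
    (hBI : ∀ j < J, ∀ k ∈ K, B j k ⊆ I)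
    (hBc : ∀ j < J, ∀ k ∈ K, ((B j k).card : ℝ) ≤ D * V / 4 ^ j)
    (hNL : ∀ j < J, (K.image fun k => A (j + 1) k \ A j k).card ≤ M ^ (j + 1))
    (hNB : ∀ j < J, (K.image (B j)).card ≤ M ^ (j + 1)) :
    ∃ G : Ω → ℝ, Integrable G μ ∧
      (∀ ω, ∀ k ∈ K, (csum μ X (fun x => max x 0) (A J k) ω) ^ 2 ≤ G ω) ∧
      ∫ ω, G ω ∂μ ≤ chainConst D M * a ^ 2 := by
  obtain ⟨G0, hG0i, hG0, hG0b⟩ := hNA.overshoot_bound hX ha hXi hs I hI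
    (by rw [haV, mul_comm]; gcongr)
  have hb : ∀ j : ℕ, 0 < a / 2 ^ j := fun j => by positivity
  have hbb : ∀ j : ℕ, a / 2 ^ (j + 1) ≤ a / 2 ^ j := fun j => by
    gcongr
    · norm_num
    · omega
  -- the cost of a maximum over at most `M ^ (j + 1)` sets of size at most `D V / 4 ^ j`
  have hmax : ∀ j < J, ∀ (h : ℝ → ℝ) (F : Finset (Finset ι)), Monotone h → (∀ x, 0 ≤ h x) →
      (∀ x, h x ≤ clip (a / 2 ^ j) x) → F.card ≤ M ^ (j + 1) → (∀ C ∈ F, C ⊆ I) →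
      (∀ C ∈ F, (C.card : ℝ) ≤ D * V / 4 ^ j) →
      ∃ G : Ω → ℝ, Integrable G μ ∧ (∀ ω, ∀ C ∈ F, (csum μ X h C ω) ^ 2 ≤ G ω) ∧
        ∫ ω, G ω ∂μ ≤ (2 * (j + 1) ^ 2 * M ^ 2 + 8 * Real.exp D) * (a ^ 2 / 4 ^ j) := by
    intro j _ h F hm h0 hle hFc hFI hFC
    have h4 : (4 : ℝ) ^ j = (2 ^ j) ^ 2 := by rw [← pow_mul, mul_comm, pow_mul]; norm_num
    obtain ⟨G, h1, h2, h3⟩ := hNA.max_csum hX hm (β := a / 2 ^ j) (l := 2 ^ j / a) (s := s)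
      (t := (j + 1) * M * (a / 2 ^ j)) (D := D) h0 (fun x => (hle x).trans (clip_le _ _))
      (by positivity) (le_of_eq (by field_simp))
      (fun i hi => integral_sq_le (hXi i hi) (hs i hi) h0
        fun x => (hle x).trans (clip_le_abs _ _)) F
      (fun C hC => (Finset.coe_subset.2 (hFI C hC)).trans hI)
      (fun C hC => by
        calc (2 ^ j / a) ^ 2 * (C.card * s) ≤ (2 ^ j / a) ^ 2 * (D * V / 4 ^ j * s) := by
              have := hFC C hC
              gcongr
          _ = D * (s * V) / a ^ 2 := by rw [h4]; field_simp
          _ = D := by rw [← haV]; field_simp)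
      (by positivity)
      (by
        have e : (2 : ℝ) ^ j / a * ((j + 1) * M * (a / 2 ^ j)) = ((j + 1 : ℕ) : ℝ) * M := by
          push_cast; field_simp
        rw [e, Real.exp_nat_mul]
        have : (M : ℝ) ≤ Real.exp M := by linarith [Real.add_one_le_exp (M : ℝ)]
        calc (F.card : ℝ) ≤ (M : ℝ) ^ (j + 1) := by exact_mod_cast hFc
          _ ≤ _ := by gcongr)
    refine ⟨G, h1, h2, h3.trans (le_of_eq ?_)⟩
    rw [h4]; field_simp
  have hlink : ∀ j : ℕ, ∃ G : Ω → ℝ, j < J → Integrable G μ ∧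
      (∀ ω, ∀ k ∈ K, (csum μ X (clip (a / 2 ^ j)) (A (j + 1) k \ A j k) ω) ^ 2 ≤ G ω) ∧
        ∫ ω, G ω ∂μ ≤ (2 * (j + 1) ^ 2 * M ^ 2 + 8 * Real.exp D) * (a ^ 2 / 4 ^ j) := by
    intro j
    by_cases hj : j < J
    · obtain ⟨G, h1, h2, h3⟩ := hmax j hj _ _ (clip_mono (a / 2 ^ j)) (clip_nonneg (hb j).le)
        (fun x => le_rfl) (hNL j hj) (by
          intro C hC
          obtain ⟨k, hk, rfl⟩ := Finset.mem_image.1 hC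
          exact (hLB j hj k hk).trans (hBI j hj k hk)) (by
          intro C hC
          obtain ⟨k, hk, rfl⟩ := Finset.mem_image.1 hC
          exact le_trans (by exact_mod_cast Finset.card_le_card (hLB j hj k hk)) (hBc j hj k hk))
      exact ⟨G, fun _ => ⟨h1, fun ω k hk => h2 ω _ (Finset.mem_image_of_mem _ hk), h3⟩⟩
    · exact ⟨0, fun h => absurd h hj⟩
  have hring : ∀ j : ℕ, ∃ G : Ω → ℝ, j < J → Integrable G μ ∧
      (∀ ω, ∀ k ∈ K, (csum μ X (layer (a / 2 ^ j) (a / 2 ^ (j + 1))) (B j k) ω) ^ 2 ≤ G ω) ∧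
        ∫ ω, G ω ∂μ ≤ (2 * (j + 1) ^ 2 * M ^ 2 + 8 * Real.exp D) * (a ^ 2 / 4 ^ j) := by
    intro j
    by_cases hj : j < J
    · obtain ⟨G, h1, h2, h3⟩ := hmax j hj _ _ (layer_mono (hbb j)) (layer_nonneg (hbb j))
        (fun x => layer_le_clip (hb (j + 1)).le x) (hNB j hj) (by
          intro C hC
          obtain ⟨k, hk, rfl⟩ := Finset.mem_image.1 hC
          exact hBI j hj k hk) (by
          intro C hC
          obtain ⟨k, hk, rfl⟩ := Finset.mem_image.1 hC
          exact hBc j hj k hk)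
      exact ⟨G, fun _ => ⟨h1, fun ω k hk => h2 ω _ (Finset.mem_image_of_mem _ hk), h3⟩⟩
    · exact ⟨0, fun h => absurd h hj⟩
  choose linkG hlinkG using hlink
  choose ringG hringG using hring
  have hmean : ∀ j < J, ∀ k ∈ K,
      ∑ i ∈ B j k, ∫ ω', layer (a / 2 ^ j) (a / 2 ^ (j + 1)) (X i ω') ∂μ ≤
        2 * D * (a / 2 ^ j) := by
    intro j hj k hk
    have h1 : ∀ i ∈ B j k, ∫ ω', layer (a / 2 ^ j) (a / 2 ^ (j + 1)) (X i ω') ∂μ ≤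
        s / (a / 2 ^ (j + 1)) := fun i hi => by
      have hiS := hI (hBI j hj k hk hi)
      exact integral_le_div (hXi i hiS) (hb _) (hs i hiS) (layer_nonneg (hbb j))
        (layer_le_sq (hb _))
    refine (Finset.sum_le_card_nsmul _ _ _ h1).trans ?_
    rw [nsmul_eq_mul]
    have h4 : (4 : ℝ) ^ j = (2 ^ j) ^ 2 := by rw [← pow_mul, mul_comm, pow_mul]; norm_num
    calc ((B j k).card : ℝ) * (s / (a / 2 ^ (j + 1)))
        ≤ D * V / 4 ^ j * (s / (a / 2 ^ (j + 1))) :=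
          mul_le_mul_of_nonneg_right (hBc j hj k hk) (by positivity)
      _ = 2 * D * (s * V) / a / 2 ^ j := by rw [h4]; field_simp; ring
      _ = 2 * D * (a / 2 ^ j) := by rw [← haV]; field_simp
  have hmean0 : ∀ j k,
      0 ≤ ∑ i ∈ B j k, ∫ ω', layer (a / 2 ^ j) (a / 2 ^ (j + 1)) (X i ω') ∂μ := fun j k =>
    Finset.sum_nonneg fun i _ => integral_nonneg fun ω => layer_nonneg (hbb j) _
  have hGi : ∀ j ∈ range J, Integrable (fun ω =>
      2 ^ j * (3 * (linkG j ω + ringG j ω + (2 * D * (a / 2 ^ j)) ^ 2))) μ := fun j hj => by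
    have hj := Finset.mem_range.1 hj
    exact ((((hlinkG j hj).1.add (hringG j hj).1).add (integrable_const _)).const_mul 3).const_mul _
  refine ⟨fun ω => 2 * G0 ω + 4 * ∑ j ∈ range J,
    2 ^ j * (3 * (linkG j ω + ringG j ω + (2 * D * (a / 2 ^ j)) ^ 2)),
    (hG0i.const_mul 2).add ((integrable_finsetSum _ hGi).const_mul 4), ?_, ?_⟩
  · intro ω k hk
    have hAS : ∀ i ∈ A J k, i ∈ S := fun i hi => hI (hAJ k hk hi)
    have hXm : ∀ i ∈ A J k, Measurable (X i) := fun i hi => hX i (hAS i hi)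
    have iclip : ∀ i ∈ A J k, Integrable (fun ω => clip a (X i ω)) μ :=
      fun i hi => integrable_of_mem_Icc ((clip_mono a).measurable.comp (hXm i hi))
        fun ω => ⟨clip_nonneg ha.le _, clip_le _ _⟩
    have iover : ∀ i ∈ A J k, Integrable (fun ω => overshoot a (X i ω)) μ := fun i hi => by
      refine ((hXi i (hAS i hi)).div_const a).mono'
        ((overshoot_mono a).measurable.comp (hXm i hi)).aestronglyMeasurable
        (Eventually.of_forall fun ω => ?_)
      rw [Real.norm_eq_abs, abs_of_nonneg (overshoot_nonneg _ _)]
      exact overshoot_le_sq ha _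
    have e := csum_add (μ := μ) X (h := fun x => max x 0) (h1 := clip a) (h2 := overshoot a)
      (fun x => by unfold overshoot; ring) (A J k) iclip iover ω
    have c := abs_csum_chain (μ := μ) (X := X) ha J (fun j => A j k) (fun j => B j k) hXm
      (fun j hj => hA j hj k hk) (fun j hj => hAB j hj k hk) ω
    simp only [hA0 k hk, Finset.sdiff_empty] at c
    set cj : ℕ → ℝ := fun j => |csum μ X (clip (a / 2 ^ j)) (A (j + 1) k \ A j k) ω| +
        (|csum μ X (layer (a / 2 ^ j) (a / 2 ^ (j + 1))) (B j k) ω| +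
          ∑ i ∈ B j k, ∫ ω', layer (a / 2 ^ j) (a / 2 ^ (j + 1)) (X i ω') ∂μ) with hcj
    have c2 : (csum μ X (clip a) (A J k) ω) ^ 2 ≤ 2 * ∑ j ∈ range J, 2 ^ j * (cj j) ^ 2 := by
      refine le_trans ?_ (sq_sum_le_weighted J cj)
      rw [← sq_abs]
      exact pow_le_pow_left₀ (abs_nonneg _) c 2
    have c3 : ∑ j ∈ range J, 2 ^ j * (cj j) ^ 2 ≤ ∑ j ∈ range J,
        2 ^ j * (3 * (linkG j ω + ringG j ω + (2 * D * (a / 2 ^ j)) ^ 2)) := by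
      refine Finset.sum_le_sum fun j hj => ?_
      have hj := Finset.mem_range.1 hj
      refine mul_le_mul_of_nonneg_left ?_ (by positivity)
      have l1 := (hlinkG j hj).2.1 ω k hk
      have l2 := (hringG j hj).2.1 ω k hk
      have l3 := pow_le_pow_left₀ (hmean0 j k) (hmean j hj k hk) 2
      rw [← sq_abs] at l1 l2
      simp only [hcj]
      generalize |csum μ X (clip (a / 2 ^ j)) (A (j + 1) k \ A j k) ω| = x at *
      generalize |csum μ X (layer (a / 2 ^ j) (a / 2 ^ (j + 1))) (B j k) ω| = y at *
      generalize (∑ i ∈ B j k, ∫ ω', layer (a / 2 ^ j) (a / 2 ^ (j + 1)) (X i ω') ∂μ) = z at *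
      nlinarith [sq_nonneg (x - y), sq_nonneg (x - z), sq_nonneg (y - z)]
    have c4 := hG0 ω (A J k) (hAJ k hk)
    rw [e]
    nlinarith [sq_nonneg (csum μ X (clip a) (A J k) ω - csum μ X (overshoot a) (A J k) ω)]
  · rw [integral_add (hG0i.const_mul 2) ((integrable_finsetSum _ hGi).const_mul 4),
      integral_const_mul, integral_const_mul, integral_finsetSum _ hGi]
    have h1 : ∀ j ∈ range J, ∫ ω, 2 ^ j * (3 * (linkG j ω + ringG j ω + (2 * D * (a / 2 ^ j)) ^ 2)) ∂μ ≤
        3 * a ^ 2 * chainTerm D M j := by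
      intro j hj
      have hj := Finset.mem_range.1 hj
      have i1 := (hlinkG j hj).1
      have i2 := (hringG j hj).1
      have b1 := (hlinkG j hj).2.2
      have b2 := (hringG j hj).2.2
      have i12 : Integrable (fun ω => linkG j ω + ringG j ω) μ := i1.add i2
      have e : ∫ ω, 2 ^ j * (3 * (linkG j ω + ringG j ω + (2 * D * (a / 2 ^ j)) ^ 2)) ∂μ =
          2 ^ j * (3 * (∫ ω, linkG j ω ∂μ + ∫ ω, ringG j ω ∂μ + (2 * D * (a / 2 ^ j)) ^ 2)) := by
        rw [integral_const_mul, integral_const_mul, integral_add i12 (integrable_const _),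
          integral_add i1 i2]
        simp
      rw [e]
      have h4 : (4 : ℝ) ^ j = (2 ^ j) ^ 2 := by rw [← pow_mul, mul_comm, pow_mul]; norm_num
      calc _ ≤ 2 ^ j * (3 * ((2 * (j + 1) ^ 2 * M ^ 2 + 8 * Real.exp D) * (a ^ 2 / 4 ^ j) +
            (2 * (j + 1) ^ 2 * M ^ 2 + 8 * Real.exp D) * (a ^ 2 / 4 ^ j) +
            (2 * D * (a / 2 ^ j)) ^ 2)) := by gcongr
        _ = _ := by
          unfold chainTerm
          rw [h4, one_div, inv_pow]; field_simp; ring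
    have h2 := Finset.sum_le_sum h1
    rw [← Finset.mul_sum] at h2
    have h3 := (summable_chainTerm D M).sum_le_tsum (range J) fun j _ => chainTerm_nonneg D M j
    have h5 := mul_le_mul_of_nonneg_left h3 (by positivity : 0 ≤ 3 * a ^ 2)
    unfold chainConst
    nlinarith

/-! ### Grids in a box with sides powers of four -/

/-- Side lengths of the cells at scale `j` of the box with sides `4 ^ r c`; a side is never
shorter than `1`, by truncated subtraction. -/
def cellSide {d : ℕ} (r : Fin d → ℕ) (j : ℕ) (c : Fin d) : ℕ := 4 ^ (r c - j)

/-- The position of the cell of scale `j` containing `k`. -/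
def cellIdx {d : ℕ} (r : Fin d → ℕ) (j : ℕ) (k : Fin d → ℕ) : Fin d → ℕ :=
  fun c => k c / cellSide r j c

/-- Lower corner of the cell at position `q`. -/
def cellLow {d : ℕ} (r : Fin d → ℕ) (j : ℕ) (q : Fin d → ℕ) : Fin d → ℕ :=
  fun c => q c * cellSide r j c

/-- Upper corner of the cell at position `q`. -/
def cellHigh {d : ℕ} (r : Fin d → ℕ) (j : ℕ) (q : Fin d → ℕ) : Fin d → ℕ :=
  fun c => q c * cellSide r j c + (cellSide r j c - 1)

section
variable {d : ℕ} (r : Fin d → ℕ)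

lemma cellSide_pos (j : ℕ) (c : Fin d) : 0 < cellSide r j c := by
  unfold cellSide; positivity

lemma cellSide_dvd {i j : ℕ} (h : i ≤ j) (c : Fin d) : cellSide r j c ∣ cellSide r i c :=
  pow_dvd_pow 4 (by omega)

lemma cellSide_dvd_side (j : ℕ) (c : Fin d) : cellSide r j c ∣ 4 ^ r c :=
  pow_dvd_pow 4 (by omega)

lemma cellLow_le (j : ℕ) (k : Fin d → ℕ) : cellLow r j (cellIdx r j k) ≤ k :=
  fun _ => Nat.div_mul_le_self _ _

lemma le_cellHigh (j : ℕ) (k : Fin d → ℕ) : k ≤ cellHigh r j (cellIdx r j k) := fun c => by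
  have h1 := Nat.div_add_mod (k c) (cellSide r j c)
  have h2 := Nat.mod_lt (k c) (cellSide_pos r j c)
  rw [mul_comm] at h1
  show k c ≤ k c / cellSide r j c * cellSide r j c + (cellSide r j c - 1)
  omega

lemma cellIdx_cellIdx {i j : ℕ} (h : i ≤ j) (k : Fin d → ℕ) :
    cellIdx r i k = fun c => cellIdx r j k c / (cellSide r i c / cellSide r j c) := by
  funext c
  simp only [cellIdx]
  rw [Nat.div_div_eq_div_mul, Nat.mul_div_cancel' (cellSide_dvd r h c)]

lemma cellLow_mono {i j : ℕ} (h : i ≤ j) (k : Fin d → ℕ) :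
    cellLow r i (cellIdx r i k) ≤ cellLow r j (cellIdx r j k) := fun c => by
  obtain ⟨e, he⟩ := cellSide_dvd r h c
  simp only [cellLow, cellIdx]
  rw [he, mul_comm (cellSide r j c) e, ← mul_assoc]
  gcongr
  rw [Nat.le_div_iff_mul_le (cellSide_pos r j c), mul_assoc]
  exact Nat.div_mul_le_self _ _

lemma cellIdx_lt (j : ℕ) {k : Fin d → ℕ} (hk : ∀ c, k c < 4 ^ r c) (c : Fin d) :
    cellIdx r j k c < 4 ^ j := by
  have h1 : 4 ^ r c ≤ 4 ^ j * cellSide r j c := by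
    unfold cellSide; rw [← pow_add]; exact Nat.pow_le_pow_right (by norm_num) (by omega)
  exact (Nat.div_lt_iff_lt_mul (cellSide_pos r j c)).2 ((hk c).trans_le h1)

lemma cellHigh_lt (j : ℕ) {k : Fin d → ℕ} (hk : ∀ c, k c < 4 ^ r c) (c : Fin d) :
    cellHigh r j (cellIdx r j k) c < 4 ^ r c := by
  have hp := cellSide_pos r j c
  obtain ⟨e, he⟩ := cellSide_dvd_side r j c
  have h1 : k c / cellSide r j c < e := by
    rw [Nat.div_lt_iff_lt_mul hp, mul_comm, ← he]; exact hk c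
  have h2 : (k c / cellSide r j c + 1) * cellSide r j c ≤ 4 ^ r c := by
    rw [he, mul_comm (cellSide r j c)]; gcongr; omega
  rw [add_mul, one_mul] at h2
  show k c / cellSide r j c * cellSide r j c + (cellSide r j c - 1) < _
  omega

/-- Counting points at scale `j`: any set depending only on the cell of scale `j` takes at most
`4 ^ (d j)` values. -/
lemma card_image_cellIdx_le {γ : Type} [DecidableEq γ] (j : ℕ) (K : Finset (Fin d → ℕ))
    (hK : ∀ k ∈ K, ∀ c, k c < 4 ^ r c) (f : (Fin d → ℕ) → γ) :
    (K.image fun k => f (cellIdx r j k)).card ≤ (4 ^ d) ^ j := by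
  have h : (K.image fun k => f (cellIdx r j k)) ⊆
      (Fintype.piFinset fun _ : Fin d => range (4 ^ j)).image f := by
    intro x hx
    obtain ⟨k, hk, rfl⟩ := Finset.mem_image.1 hx
    exact Finset.mem_image_of_mem _ (Fintype.mem_piFinset.2 fun c =>
      Finset.mem_range.2 (cellIdx_lt r j (hK k hk) c))
  refine (Finset.card_le_card h).trans (Finset.card_image_le.trans (le_of_eq ?_))
  rw [Fintype.card_piFinset]
  simp [← pow_mul, mul_comm]

/-- The points below the upper but not below the lower corner of a cell lie in `d` slabs, each
occupying a fraction at most `4⁻ʲ` of the box. -/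
lemma card_bracket_le (j : ℕ) {k : Fin d → ℕ} (hk : ∀ c, k c < 4 ^ r c) :
    ((Icc 1 (cellHigh r j (cellIdx r j k)) \ Icc 1 (cellLow r j (cellIdx r j k))).card : ℝ) ≤
      d * (∏ c, (4 : ℝ) ^ r c) / 4 ^ j := by
  classical
  set q := cellIdx r j k with hq
  let slab : Fin d → Finset (Fin d → ℕ) := fun c => Fintype.piFinset fun c' =>
    if c' = c then Ioc (cellLow r j q c) (cellHigh r j q c) else Icc 1 (4 ^ r c')
  have hsub : (Icc 1 (cellHigh r j q) \ Icc 1 (cellLow r j q)) ⊆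
      (univ : Finset (Fin d)).biUnion slab := by
    intro x hx
    simp only [Finset.mem_sdiff, Finset.mem_Icc, not_and] at hx
    obtain ⟨⟨h1, h2⟩, h3⟩ := hx
    have h3 := h3 h1
    rw [Pi.le_def] at h3
    push Not at h3
    obtain ⟨c, hc⟩ := h3
    refine Finset.mem_biUnion.2 ⟨c, Finset.mem_univ _, Fintype.mem_piFinset.2 fun c' => ?_⟩
    split_ifs with h
    · subst h
      exact Finset.mem_Ioc.2 ⟨hc, h2 _⟩
    · exact Finset.mem_Icc.2 ⟨h1 c', (h2 c').trans (cellHigh_lt r j hk c').le⟩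
  have hslab : ∀ c, ((slab c).card : ℝ) * 4 ^ j ≤ ∏ c, (4 : ℝ) ^ r c := by
    intro c
    rw [Fintype.card_piFinset, ← Finset.mul_prod_erase _ _ (Finset.mem_univ c),
      ← Finset.mul_prod_erase _ (fun c => (4 : ℝ) ^ r c) (Finset.mem_univ c)]
    have e : ∏ x ∈ univ.erase c, (if x = c then Ioc (cellLow r j q c) (cellHigh r j q c)
        else Icc 1 (4 ^ r x)).card = ∏ x ∈ univ.erase c, 4 ^ r x :=
      Finset.prod_congr rfl fun x hx => by rw [if_neg (Finset.ne_of_mem_erase hx)]; simp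
    rw [e, if_pos rfl, Nat.card_Ioc]
    have e2 : cellHigh r j q c - cellLow r j q c = cellSide r j c - 1 := by
      simp only [cellHigh, cellLow]; omega
    have e3 : (cellSide r j c - 1) * 4 ^ j ≤ 4 ^ r c := by
      unfold cellSide
      rcases le_total j (r c) with h | h
      · calc (4 ^ (r c - j) - 1) * 4 ^ j ≤ 4 ^ (r c - j) * 4 ^ j :=
            Nat.mul_le_mul_right _ (Nat.sub_le _ _)
          _ = 4 ^ r c := by rw [← pow_add]; congr 1; omega
      · rw [Nat.sub_eq_zero_of_le h]; simp
    rw [e2]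
    have e4 : ((cellSide r j c - 1 : ℕ) : ℝ) * 4 ^ j ≤ 4 ^ r c := by exact_mod_cast e3
    push_cast
    rw [mul_right_comm]
    gcongr
  rw [le_div_iff₀ (by positivity)]
  have h1 : (((Icc 1 (cellHigh r j q) \ Icc 1 (cellLow r j q)).card : ℕ) : ℝ) ≤
      ∑ c, ((slab c).card : ℝ) := by
    exact_mod_cast (Finset.card_le_card hsub).trans Finset.card_biUnion_le
  calc _ ≤ (∑ c, ((slab c).card : ℝ)) * 4 ^ j := by gcongr
    _ = ∑ c, ((slab c).card : ℝ) * 4 ^ j := Finset.sum_mul _ _ _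
    _ ≤ ∑ _c : Fin d, ∏ c, (4 : ℝ) ^ r c := Finset.sum_le_sum fun c _ => hslab c
    _ = _ := by simp

end

/-- Maximal inequality for the positive parts over the rectangles anchored at `1`. -/
lemma NegAssocOn.max_rect {d : ℕ} (hd : 1 ≤ d) {Ω : Type} [MeasurableSpace Ω] {μ : Measure Ω}
    [IsProbabilityMeasure μ] {X : (Fin d → ℕ) → Ω → ℝ} (hNA : NegAssocOn μ X (Set.Ici 1))
    (hX : ∀ i ∈ Set.Ici 1, Measurable (X i)) {s : ℝ} (hs0 : 0 < s)
    (hXi : ∀ i ∈ Set.Ici 1, Integrable (fun ω => (X i ω) ^ 2) μ)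
    (hs : ∀ i ∈ Set.Ici 1, ∫ ω, (X i ω) ^ 2 ∂μ ≤ s) (r : Fin d → ℕ)
    (K : Finset (Fin d → ℕ)) (hK : ∀ k ∈ K, ∀ c, k c < 4 ^ r c) :
    ∃ G : Ω → ℝ, Integrable G μ ∧
      (∀ ω, ∀ k ∈ K, (csum μ X (fun x => max x 0) (Icc 1 k) ω) ^ 2 ≤ G ω) ∧
      ∫ ω, G ω ∂μ ≤ chainConst d ((4 ^ d : ℕ) : ℝ) * (s * ∏ c, (4 : ℝ) ^ r c) := by
  classical
  have hV : 0 < ∏ c, (4 : ℝ) ^ r c := Finset.prod_pos fun c _ => by positivity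
  have hlast : ∀ k, cellLow r (∑ c, r c) (cellIdx r (∑ c, r c) k) = k := by
    intro k
    funext c
    have : cellSide r (∑ c, r c) c = 1 := by
      unfold cellSide
      rw [Nat.sub_eq_zero_of_le (Finset.single_le_sum (fun _ _ => Nat.zero_le _)
        (Finset.mem_univ c))]
      rfl
    simp [cellLow, cellIdx, this]
  have hsq : Real.sqrt (s * ∏ c, (4 : ℝ) ^ r c) ^ 2 = s * ∏ c, (4 : ℝ) ^ r c :=
    Real.sq_sqrt (by positivity)
  have hIccS : ∀ n : Fin d → ℕ, (↑(Icc 1 n) : Set (Fin d → ℕ)) ⊆ Set.Ici 1 := fun n x hx =>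
    (Finset.mem_Icc.1 hx).1
  have key := hNA.chaining hX (s := s) (a := Real.sqrt (s * ∏ c, (4 : ℝ) ^ r c))
    (V := ∏ c, (4 : ℝ) ^ r c) (D := d) (M := 4 ^ d) (Real.sqrt_pos.2 (by positivity)) hs0 hsq
    hXi hs (Icc 1 fun c => 4 ^ r c) (hIccS _)
    (by rw [Pi.card_Icc]; simp) K (∑ c, r c)
    (fun j k => Icc 1 (cellLow r j (cellIdx r j k)))
    (fun j k => Icc 1 (cellHigh r j (cellIdx r j k)) \ Icc 1 (cellLow r j (cellIdx r j k)))
    (fun k hk => by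
      rw [Finset.Icc_eq_empty]
      intro h
      have h0 := h ⟨0, hd⟩
      have : k ⟨0, hd⟩ / 4 ^ r ⟨0, hd⟩ = 0 := Nat.div_eq_of_lt (hK k hk _)
      simp [cellLow, cellIdx, cellSide, this] at h0)
    (fun k hk => by
      simp only [hlast]
      exact Finset.Icc_subset_Icc_right fun c => (hK k hk c).le)
    (fun j _ k _ => Finset.Icc_subset_Icc_right (cellLow_mono r (Nat.le_succ j) k))
    (fun j _ k _ => by
      simp only [hlast]
      exact Finset.sdiff_subset_sdiff (Finset.Icc_subset_Icc_right (le_cellHigh r j k)) subset_rfl)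
    (fun j _ k _ => Finset.sdiff_subset_sdiff (Finset.Icc_subset_Icc_right
      ((cellLow_le r (j + 1) k).trans (le_cellHigh r j k))) subset_rfl)
    (fun j _ k hk => Finset.sdiff_subset.trans (Finset.Icc_subset_Icc_right fun c =>
      (cellHigh_lt r j (hK k hk) c).le))
    (fun j _ k hk => card_bracket_le r j (hK k hk))
    (fun j _ => by
      simp only [cellIdx_cellIdx r (Nat.le_succ j)]
      exact card_image_cellIdx_le r (j + 1) K hK fun q => Icc 1 (cellLow r (j + 1) q) \
        Icc 1 (cellLow r j fun c => q c / (cellSide r j c / cellSide r (j + 1) c)))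
    (fun j _ => (card_image_cellIdx_le r j K hK fun q =>
      Icc 1 (cellHigh r j q) \ Icc 1 (cellLow r j q)).trans
        (Nat.pow_le_pow_right (by positivity) (Nat.le_succ j)))
  simpa only [hlast, hsq] using key

/-! ### Stationary fields -/

/-- Strict stationarity makes all the variables of the field identically distributed. -/
lemma identDistrib_of_stationary {d : ℕ} {Ω : Type} [MeasurableSpace Ω] {μ : Measure Ω}
    {Y : (Fin d → ℕ) → Ω → ℝ} (hY : ∀ k : Fin d → ℕ, 1 ≤ k → Measurable (Y k))
    (hst : ∀ (m : Fin d → ℕ) (A : Finset (Fin d → ℕ)), ↑A ⊆ Set.Ici (1 : Fin d → ℕ) →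
        μ.map (fun ω => (fun k : ↥A => Y (k + m) ω)) =
          μ.map (fun ω => (fun k : ↥A => Y k ω))) (k : Fin d → ℕ) (hk : 1 ≤ k) :
    ProbabilityTheory.IdentDistrib (Y k) (Y 1) μ μ := by
  refine ⟨(hY k hk).aemeasurable, (hY 1 le_rfl).aemeasurable, ?_⟩
  have h := hst (k - 1) {1} (by simp)
  have hmem : ∀ i : ↥({1} : Finset (Fin d → ℕ)), (i : Fin d → ℕ) = 1 := fun i =>
    Finset.mem_singleton.1 i.2
  have h2 := congrArg (Measure.map fun x : ↥({1} : Finset (Fin d → ℕ)) → ℝ =>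
    x ⟨1, Finset.mem_singleton_self 1⟩) h
  rw [Measure.map_map (measurable_pi_apply _) (measurable_pi_lambda _ fun i => by
      rw [hmem i, add_tsub_cancel_of_le hk]; exact hY k hk),
    Measure.map_map (measurable_pi_apply _) (measurable_pi_lambda _ fun i => by
      rw [hmem i]; exact hY 1 le_rfl)] at h2
  have e : (1 : Fin d → ℕ) + (k - 1) = k := add_tsub_cancel_of_le hk
  simpa [Function.comp_def, e] using h2

/-- **Second-moment bound for the maximum of partial sums of a strictly stationary
negatively associated field** (Proposition 2.2). There is a constant `K` depending only on
`d` such that `limsup_{n → ∞} |n|⁻¹ E[max_{k ≤ n} T_k²] ≤ K E Y_1²`. -/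
theorem na_field_stationary_max_second_moment
    (d : ℕ) (hd : 1 ≤ d) :
    ∃ K : ℝ, ∀ (Ω : Type) (_ : MeasurableSpace Ω) (μ : Measure Ω),
      IsProbabilityMeasure μ →
      ∀ (Y : (Fin d → ℕ) → Ω → ℝ),
      (∀ k : Fin d → ℕ, 1 ≤ k → Measurable (Y k)) →
      NegAssocOn μ Y (Set.Ici 1) →
      -- strict stationarity: the joint law of any finite subfamily is invariant under shifts
      (∀ (m : Fin d → ℕ) (A : Finset (Fin d → ℕ)), ↑A ⊆ Set.Ici (1 : Fin d → ℕ) →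
        μ.map (fun ω => (fun k : ↥A => Y (k + m) ω)) =
          μ.map (fun ω => (fun k : ↥A => Y k ω))) →
      (∫ ω, Y 1 ω ∂μ) = 0 →
      Integrable (fun ω => (Y 1 ω) ^ 2) μ →
      0 < ∫ ω, (Y 1 ω) ^ 2 ∂μ →
      Filter.limsup (fun n : Fin d → ℕ =>
          (((∏ i, (n i : ℝ))⁻¹ *
            ∫ ω, ⨆ k ∈ Finset.Icc (1 : Fin d → ℕ) n,
              (∑ i ∈ Finset.Icc (1 : Fin d → ℕ) k, Y i ω) ^ 2 ∂μ) : EReal))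
        Filter.atTop ≤ ((K * ∫ ω, (Y 1 ω) ^ 2 ∂μ : ℝ) : EReal) := by
  refine ⟨4 * chainConst d ((4 ^ d : ℕ) : ℝ) * 4 ^ d, ?_⟩
  intro Ω _ μ _ Y hY hNA hst hmean hsq hpos
  set s := ∫ ω, (Y 1 ω) ^ 2 ∂μ with hs
  have hid := identDistrib_of_stationary hY hst
  have hsqm : Measurable fun x : ℝ => x ^ 2 := by fun_prop
  have hYi : ∀ i ∈ Set.Ici (1 : Fin d → ℕ), Integrable (fun ω => (Y i ω) ^ 2) μ := fun i hi =>
    ((hid i hi).comp hsqm).integrable_iff.2 hsq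
  have hYs : ∀ i ∈ Set.Ici (1 : Fin d → ℕ), ∫ ω, (Y i ω) ^ 2 ∂μ ≤ s := fun i hi =>
    ((hid i hi).comp hsqm).integral_eq.le
  have hYm : ∀ i ∈ Set.Ici (1 : Fin d → ℕ), ∫ ω, Y i ω ∂μ = 0 := fun i hi =>
    (hid i hi).integral_eq.trans hmean
  have hY1 : ∀ i ∈ Set.Ici (1 : Fin d → ℕ), Integrable (Y i) μ := fun i hi =>
    ((memLp_two_iff_integrable_sq (hY i hi).aestronglyMeasurable).2 (hYi i hi)).integrable
      (by norm_num)
  -- since the variables are centred, the partial sums are differences of the centred sums of the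
  -- positive parts of `Y` and of `-Y`
  have hsplit : ∀ (B : Finset (Fin d → ℕ)), ↑B ⊆ Set.Ici (1 : Fin d → ℕ) → ∀ ω,
      ∑ i ∈ B, Y i ω = csum μ Y (fun x => max x 0) B ω -
        csum μ (fun i ω => -Y i ω) (fun x => max x 0) B ω := by
    intro B hB ω
    unfold csum
    rw [← Finset.sum_sub_distrib]
    refine Finset.sum_congr rfl fun i hi => ?_
    have hpm : ∀ x : ℝ, max x 0 - max (-x) 0 = x := fun x => by
      rcases le_total 0 x with h | h
      · rw [max_eq_left h, max_eq_right (by linarith)]; ring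
      · rw [max_eq_right h, max_eq_left (by linarith)]; ring
    have h1 := integral_sub (hY1 i (hB hi)).pos_part (hY1 i (hB hi)).neg_part
    simp only [hpm] at h1
    rw [hYm i (hB hi)] at h1
    linarith [hpm (Y i ω)]
  refine Filter.limsup_le_of_le (h := ?_)
  filter_upwards [Filter.eventually_ge_atTop (1 : Fin d → ℕ)] with n hn
  rw [← EReal.coe_mul, EReal.coe_le_coe_iff]
  -- enlarge the sides of the box to powers of `4`, losing at most a factor `4` in each of them
  set r : Fin d → ℕ := fun c => Nat.log 4 (n c) + 1 with hr
  have hK : ∀ k ∈ Icc 1 n, ∀ c, k c < 4 ^ r c := fun k hk c =>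
    ((Finset.mem_Icc.1 hk).2 c).trans_lt (Nat.lt_pow_succ_log_self (by norm_num) _)
  obtain ⟨G1, i1, hG1, b1⟩ := hNA.max_rect hd hY hpos hYi hYs r (Icc 1 n) hK
  obtain ⟨G2, i2, hG2, b2⟩ := hNA.neg.max_rect hd (fun i hi => (hY i hi).neg) hpos
    (by simpa using hYi) (by simpa using hYs) r (Icc 1 n) hK
  have hn0 : ∀ c, 0 < n c := fun c => hn c
  have hprod : ∏ c, (4 : ℝ) ^ r c ≤ 4 ^ d * ∏ c, (n c : ℝ) := by
    have e : (4 : ℝ) ^ d = ∏ _c : Fin d, (4 : ℝ) := by simp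
    rw [e, ← Finset.prod_mul_distrib]
    refine Finset.prod_le_prod (fun c _ => by positivity) fun c _ => ?_
    rw [hr, pow_succ, mul_comm]
    have := Nat.pow_log_le_self 4 (hn0 c).ne'
    exact mul_le_mul_of_nonneg_left (by exact_mod_cast this) (by norm_num)
  have hnpos : 0 < ∏ c, (n c : ℝ) := Finset.prod_pos fun c _ => by exact_mod_cast hn0 c
  have hint : ∫ ω, ⨆ k ∈ Finset.Icc (1 : Fin d → ℕ) n,
      (∑ i ∈ Finset.Icc (1 : Fin d → ℕ) k, Y i ω) ^ 2 ∂μ ≤ ∫ ω, (2 * G1 ω + 2 * G2 ω) ∂μ := by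
    refine integral_mono_of_nonneg (Eventually.of_forall fun ω => ?_)
      ((i1.const_mul 2).add (i2.const_mul 2)) (Eventually.of_forall fun ω => ?_)
    · exact Real.iSup_nonneg fun k => Real.iSup_nonneg fun _ => sq_nonneg _
    · have hone : (1 : Fin d → ℕ) ∈ Icc 1 n := Finset.mem_Icc.2 ⟨le_rfl, hn⟩
      have hG0 : 0 ≤ 2 * G1 ω + 2 * G2 ω := by
        linarith [(sq_nonneg _).trans (hG1 ω 1 hone), (sq_nonneg _).trans (hG2 ω 1 hone)]
      refine Real.iSup_le (fun k => Real.iSup_le (fun hk => ?_) hG0) hG0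
      rw [hsplit (Icc 1 k) (fun x hx => (Finset.mem_Icc.1 hx).1) ω]
      have := hG1 ω k hk
      have := hG2 ω k hk
      nlinarith [sq_nonneg (csum μ Y (fun x => max x 0) (Icc 1 k) ω +
        csum μ (fun i ω => -Y i ω) (fun x => max x 0) (Icc 1 k) ω)]
  rw [integral_add (i1.const_mul 2) (i2.const_mul 2), integral_const_mul, integral_const_mul]
    at hint
  have hC := chainConst_nonneg d ((4 ^ d : ℕ) : ℝ)
  have hfin : chainConst d ((4 ^ d : ℕ) : ℝ) * (s * ∏ c, (4 : ℝ) ^ r c) ≤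
      chainConst d ((4 ^ d : ℕ) : ℝ) * (s * (4 ^ d * ∏ c, (n c : ℝ))) := by gcongr
  rw [inv_mul_le_iff₀ hnpos]
  nlinarith
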